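/- arXiv:1703.10412 — 11 statements merged into one kernel-verified Lean document; each statement's English description precedes it below -/
import Mathlib

section
/- Let (X, ◁) be a dynamical set over Λ and let σ = {σ(λ) : X × X → X × X}, written σ(λ)(x, y) = (x ⇀_λ y, x ↼_λ y), satisfy the invariance condition (λ ◁ (x ⇀_λ y)) ◁ (x ↼_λ y) = (λ ◁ x) ◁ y for all λ, x, y. Define σ̃ : Q(X) ×_Λ Q(X) → Q(X) ×_Λ Q(X) by σ̃((λ, x), (λ ◁ x, y)) = ((λ, x ⇀_λ y), (λ ◁ (x ⇀_λ y), x ↼_λ y)); this is a well-defined quiver morphism, and σ satisfies the set-theoretical dynamical Yang–Baxter equation if and only if σ̃ satisfies the braid relation (σ̃ ×_Λ id) ∘ (id ×_Λ σ̃) ∘ (σ̃ ×_Λ id) = (id ×_Λ σ̃) ∘ (σ̃ ×_Λ id) ∘ (id ×_Λ σ̃) on Q(X) ×_Λ Q(X) ×_Λ Q(X). -/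
/-- `σ(λ)₁₂` on `X × X × X`, where `σ(λ)(x,y) = (l λ x y, r λ x y)`. -/
def dybS12 {Λ X : Type*} (l r : Λ → X → X → X) (lam : Λ) :
    X × X × X → X × X × X :=
  fun t => (l lam t.1 t.2.1, r lam t.1 t.2.1, t.2.2)

/-- `σ(λ ◁ X⁽¹⁾)₂₃` on `X × X × X`. -/
def dybS23 {Λ X : Type*} (act : Λ → X → Λ) (l r : Λ → X → X → X) (lam : Λ) :
    X × X × X → X × X × X :=
  fun t => (t.1, l (act lam t.1) t.2.1 t.2.2, r (act lam t.1) t.2.1 t.2.2)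

/-- The fiber product `Q(X) ×_Λ Q(X)` of the quiver associated to the
dynamical set `(X, act)` with itself. -/
def QA2 {Λ X : Type*} (act : Λ → X → Λ) : Type _ :=
  {p : (Λ × X) × (Λ × X) // act p.1.1 p.1.2 = p.2.1}

/-- The triple fiber product `Q(X) ×_Λ Q(X) ×_Λ Q(X)`. -/
def QA3 {Λ X : Type*} (act : Λ → X → Λ) : Type _ :=
  {t : (Λ × X) × (Λ × X) × (Λ × X) //
    act t.1.1 t.1.2 = t.2.1.1 ∧ act t.2.1.1 t.2.1.2 = t.2.2.1}

/-- The induced map `σ̃ : Q(X) ×_Λ Q(X) → Q(X) ×_Λ Q(X)`,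
`σ̃((λ,x),(λ◁x,y)) = ((λ, x⇀_λ y), (λ◁(x⇀_λ y), x↼_λ y))`. -/
def sigTilde {Λ X : Type*} (act : Λ → X → Λ) (l r : Λ → X → X → X) :
    QA2 act → QA2 act :=
  fun p =>
    ⟨((p.val.1.1, l p.val.1.1 p.val.1.2 p.val.2.2),
      (act p.val.1.1 (l p.val.1.1 p.val.1.2 p.val.2.2),
        r p.val.1.1 p.val.1.2 p.val.2.2)), rfl⟩

/-- `σ̃ ×_Λ id` on the triple fiber product (needs the invariance condition). -/
def sigTilde12 {Λ X : Type*} (act : Λ → X → Λ) (l r : Λ → X → X → X)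
    (hinv : ∀ lam x y, act (act lam (l lam x y)) (r lam x y) = act (act lam x) y) :
    QA3 act → QA3 act :=
  fun t =>
    ⟨((t.val.1.1, l t.val.1.1 t.val.1.2 t.val.2.1.2),
      (act t.val.1.1 (l t.val.1.1 t.val.1.2 t.val.2.1.2),
        r t.val.1.1 t.val.1.2 t.val.2.1.2),
      t.val.2.2),
      ⟨rfl, by rw [hinv, t.prop.1]; exact t.prop.2⟩⟩

/-- `id ×_Λ σ̃` on the triple fiber product. -/
def sigTilde23 {Λ X : Type*} (act : Λ → X → Λ) (l r : Λ → X → X → X) :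
    QA3 act → QA3 act :=
  fun t =>
    ⟨(t.val.1,
      (t.val.2.1.1, l t.val.2.1.1 t.val.2.1.2 t.val.2.2.2),
      (act t.val.2.1.1 (l t.val.2.1.1 t.val.2.1.2 t.val.2.2.2),
        r t.val.2.1.1 t.val.2.1.2 t.val.2.2.2)),
      ⟨t.prop.1, rfl⟩⟩

/-- The parametrization of the triple fiber product. -/
def embQ {Λ X : Type*} (act : Λ → X → Λ) (lam : Λ) (t : X × X × X) : QA3 act :=
  ⟨((lam, t.1), (act lam t.1, t.2.1), (act (act lam t.1) t.2.1, t.2.2)), rfl, rfl⟩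

theorem embQ_surj {Λ X : Type*} (act : Λ → X → Λ) (q : QA3 act) :
    ∃ lam t, embQ act lam t = q := by
  obtain ⟨⟨⟨a, x⟩, ⟨b, y⟩, ⟨c, z⟩⟩, h1, h2⟩ := q
  dsimp only at h1 h2
  subst h1
  subst h2
  exact ⟨a, (x, y, z), rfl⟩

theorem embQ_inj {Λ X : Type*} (act : Λ → X → Λ) (lam : Λ) (t u : X × X × X)
    (h : embQ act lam t = embQ act lam u) : t = u :=
  congrArg (fun q : QA3 act => (q.val.1.2, q.val.2.1.2, q.val.2.2.2)) h

theorem embQ_12 {Λ X : Type*} (act : Λ → X → Λ) (l r : Λ → X → X → X)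
    (hinv : ∀ lam x y, act (act lam (l lam x y)) (r lam x y) = act (act lam x) y)
    (lam : Λ) (t : X × X × X) :
    sigTilde12 act l r hinv (embQ act lam t) = embQ act lam (dybS12 l r lam t) := by
  apply Subtype.ext
  simp [sigTilde12, embQ, dybS12, hinv]

theorem embQ_23 {Λ X : Type*} (act : Λ → X → Λ) (l r : Λ → X → X → X)
    (lam : Λ) (t : X × X × X) :
    sigTilde23 act l r (embQ act lam t) = embQ act lam (dybS23 act l r lam t) := rfl

/-- Let `σ(λ)(x,y) = (l λ x y, r λ x y)` satisfy the invariance condition. Then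
`σ̃` is a quiver morphism (it preserves `src` and `tgt`), and `σ` satisfies the
set-theoretical dynamical Yang–Baxter equation if and only if `σ̃` satisfies the
braid relation on `Q(X) ×_Λ Q(X) ×_Λ Q(X)`. -/
theorem sigTilde_quiverMor_and_DYBE_iff_braid {Λ X : Type*} [Nonempty Λ]
    (act : Λ → X → Λ) (l r : Λ → X → X → X)
    (hinv : ∀ lam x y,
      act (act lam (l lam x y)) (r lam x y) = act (act lam x) y) :
    (∀ p : QA2 act,
      (sigTilde act l r p).val.1.1 = p.val.1.1 ∧
      act (sigTilde act l r p).val.2.1 (sigTilde act l r p).val.2.2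
        = act p.val.2.1 p.val.2.2) ∧
    ((∀ lam : Λ,
        dybS12 l r lam ∘ dybS23 act l r lam ∘ dybS12 l r lam
          = dybS23 act l r lam ∘ dybS12 l r lam ∘ dybS23 act l r lam)
      ↔ (sigTilde12 act l r hinv ∘ sigTilde23 act l r ∘ sigTilde12 act l r hinv
          = sigTilde23 act l r ∘ sigTilde12 act l r hinv ∘ sigTilde23 act l r)) := by
  refine ⟨fun p => ⟨rfl, ?_⟩, fun h => ?_, fun h lam => ?_⟩
  · rw [← p.prop]
    exact hinv _ _ _
  · funext q
    obtain ⟨lam, t, rfl⟩ := embQ_surj act q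
    simp only [Function.comp_apply, embQ_12, embQ_23]
    exact congrArg (embQ act lam) (congrFun (h lam) t)
  · funext t
    have := congrFun h (embQ act lam t)
    simp only [Function.comp_apply, embQ_12, embQ_23] at this
    exact embQ_inj act lam _ _ this
end

section
/- A dynamical set X over Λ is of PH type if and only if X is isomorphic to K_Λ in the category of dynamical sets over Λ, where K_Λ is the dynamical set with underlying set Λ and λ ◁ k = k; moreover, in that case the unique morphism ψ_X : X → K_Λ, ψ_X(λ)(x) = λ ◁_X x, is itself an isomorphism. -/
/-- A dynamical set `(X, act)` over `Λ` is of PH type (i.e. the map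
`(λ, x) ↦ (λ, λ ◁ x)` is bijective) if and only if `X` is isomorphic to the
dynamical set `K_Λ` (underlying set `Λ`, structure map `λ ◁ k = k`); moreover,
in that case the unique morphism `ψ_X : X → K_Λ`, `ψ_X(λ)(x) = λ ◁ x`, is
itself an isomorphism. -/
theorem PH_iff_iso_terminal {Λ X : Type*} [Nonempty Λ] (act : Λ → X → Λ) :
    ((Function.Bijective fun p : Λ × X => (p.1, act p.1 p.2)) ↔
      ∃ (f : Λ → X → Λ) (g : Λ → Λ → X),
        (∀ l x, f l x = act l x) ∧      -- `f` is a morphism `X → K_Λ`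
        (∀ l k, act l (g l k) = k) ∧    -- `g` is a morphism `K_Λ → X`
        (∀ l x, g l (f l x) = x) ∧
        (∀ l k, f l (g l k) = k)) ∧
    ((Function.Bijective fun p : Λ × X => (p.1, act p.1 p.2)) →
      ∃ g : Λ → Λ → X,
        (∀ l k, act l (g l k) = k) ∧    -- `g` is a morphism, inverse to `ψ_X`
        (∀ l x, g l (act l x) = x) ∧
        (∀ l k, act l (g l k) = k)) := by
  have key : (Function.Bijective fun p : Λ × X => (p.1, act p.1 p.2)) →
      ∃ g : Λ → Λ → X, (∀ l k, act l (g l k) = k) ∧ (∀ l x, g l (act l x) = x) := by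
    rintro ⟨hi, hs⟩
    have h : ∀ l k, ∃ x, act l x = k := by
      intro l k
      obtain ⟨⟨l', x⟩, hp⟩ := hs (l, k)
      obtain ⟨h1, h2⟩ := Prod.mk.inj hp
      simp only at h1 h2
      subst h1
      exact ⟨x, h2⟩
    choose g hg using h
    refine ⟨g, hg, fun l x => ?_⟩
    have h3 : (l, g l (act l x)) = (l, x) := hi (Prod.ext rfl (hg l (act l x)))
    exact (Prod.mk.inj h3).2
  refine ⟨⟨fun h => ?_, ?_⟩, fun h => ?_⟩
  · obtain ⟨g, h1, h2⟩ := key h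
    exact ⟨act, g, fun _ _ => rfl, h1, h2, h1⟩
  · rintro ⟨f, g, hf, hg, hgf, -⟩
    constructor
    · rintro ⟨l, x⟩ ⟨m, y⟩ hp
      obtain ⟨h1, h2⟩ := Prod.mk.inj hp
      simp only at h1 h2
      subst h1
      rw [← hgf l x, ← hgf l y, hf, hf, h2]
    · rintro ⟨l, k⟩
      exact ⟨(l, g l k), Prod.ext rfl (hg l k)⟩
  · obtain ⟨g, h1, h2⟩ := key h
    exact ⟨g, h1, h2, h1⟩
end

section
/- Let X be a dynamical set over Λ of PH type and let T = ⟨-,-,-⟩ be a ternary operation on Λ. Define σ_T(λ)(x, y) = (λ \ ⟨λ, λ ◁ x, (λ ◁ x) ◁ y⟩, ⟨λ, λ ◁ x, (λ ◁ x) ◁ y⟩ \ ((λ ◁ x) ◁ y)). Then σ_T is a dynamical Yang–Baxter map on X if and only if T satisfies, for all a, b, c, d ∈ Λ, the equations (E1): ⟨a, ⟨a, b, c⟩, ⟨⟨a, b, c⟩, c, d⟩⟩ = ⟨a, b, ⟨b, c, d⟩⟩ and (E2): ⟨⟨a, b, c⟩, c, d⟩ = ⟨⟨a, b, ⟨b,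 c, d⟩⟩, ⟨b, c, d⟩, d⟩. -/
/-- `σ(λ)(x,y) = (l λ x y, r λ x y)` is a dynamical Yang–Baxter map on
`(X, act)`: the invariance condition together with the set-theoretical
dynamical Yang–Baxter equation. -/
def IsDYBMap {Λ X : Type*} (act : Λ → X → Λ) (l r : Λ → X → X → X) : Prop :=
  (∀ lam x y, act (act lam (l lam x y)) (r lam x y) = act (act lam x) y) ∧
  (∀ lam : Λ,
    dybS12 l r lam ∘ dybS23 act l r lam ∘ dybS12 l r lam
      = dybS23 act l r lam ∘ dybS12 l r lam ∘ dybS23 act l r lam)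

/-- Equation (E1) for a ternary operation `T` on `Λ`. -/
def TernE1 {Λ : Type*} (T : Λ → Λ → Λ → Λ) : Prop :=
  ∀ a b c d, T a (T a b c) (T (T a b c) c d) = T a b (T b c d)

/-- Equation (E2) for a ternary operation `T` on `Λ`. -/
def TernE2 {Λ : Type*} (T : Λ → Λ → Λ → Λ) : Prop :=
  ∀ a b c d, T (T a b c) c d = T (T a b (T b c d)) (T b c d) d

/-- The left component `x ⇀_λ y = λ \ ⟨λ, λ◁x, (λ◁x)◁y⟩` of `σ_T`. -/
def sigmaTL {Λ X : Type*} (act : Λ → X → Λ) (dv : Λ → Λ → X)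
    (T : Λ → Λ → Λ → Λ) : Λ → X → X → X :=
  fun lam x y => dv lam (T lam (act lam x) (act (act lam x) y))

/-- The right component `x ↼_λ y = ⟨λ, λ◁x, (λ◁x)◁y⟩ \ ((λ◁x)◁y)` of `σ_T`. -/
def sigmaTR {Λ X : Type*} (act : Λ → X → Λ) (dv : Λ → Λ → X)
    (T : Λ → Λ → Λ → Λ) : Λ → X → X → X :=
  fun lam x y => dv (T lam (act lam x) (act (act lam x) y)) (act (act lam x) y)

/-- Shibukawa's classification: for a dynamical set `(X, act)` of PH type (with
left division `dv`), the map `σ_T` associated to a ternary operation `T` on `Λ`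
is a dynamical Yang–Baxter map if and only if `T` satisfies (E1) and (E2). -/
theorem sigmaT_DYB_iff_E1_E2 {Λ X : Type*} [Nonempty Λ] (act : Λ → X → Λ)
    (hPH : Function.Bijective fun p : Λ × X => (p.1, act p.1 p.2))
    (dv : Λ → Λ → X)
    (hdv1 : ∀ l m, act l (dv l m) = m)
    (hdv2 : ∀ l x, dv l (act l x) = x)
    (T : Λ → Λ → Λ → Λ) :
    IsDYBMap act (sigmaTL act dv T) (sigmaTR act dv T) ↔ (TernE1 T ∧ TernE2 T) := by
  unfold IsDYBMap TernE1 TernE2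
  constructor
  · rintro ⟨-, h⟩
    have H : ∀ a b c d, T a (T a b c) (T (T a b c) c d) = T a b (T b c d) ∧
        T (T a b c) c d = T (T a b (T b c d)) (T b c d) d := by
      intro a b c d
      have h1 := congrFun (h a) (dv a b, dv b c, dv c d)
      simp only [Function.comp, dybS12, dybS23, sigmaTL, sigmaTR, hdv1, Prod.mk.injEq] at h1
      obtain ⟨e1, e2, -⟩ := h1
      have f1 := congrArg (act a) e1
      simp only [hdv1] at f1
      refine ⟨f1, ?_⟩
      rw [f1] at e2
      have f2 := congrArg (act (T a b (T b c d))) e2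
      simpa only [hdv1] using f2
    exact ⟨fun a b c d => (H a b c d).1, fun a b c d => (H a b c d).2⟩
  · rintro ⟨h1, h2⟩
    refine ⟨fun lam x y => by simp only [sigmaTL, sigmaTR, hdv1], fun lam => ?_⟩
    funext ⟨x, y, z⟩
    simp only [Function.comp, dybS12, dybS23, sigmaTL, sigmaTR, hdv1, Prod.mk.injEq]
    rw [h1, ← h2]
    exact ⟨rfl, rfl, rfl⟩
end

section
/- Let X be a dynamical set over Λ of PH type. For every family σ = {σ(λ) : X × X → X × X}_{λ∈Λ} that is a dynamical Yang–Baxter map on X, there exists a unique ternary operation T = ⟨-,-,-⟩ on Λ such that σ(λ)(x, y) = (λ \ ⟨λ, λ ◁ x, (λ ◁ x) ◁ y⟩, ⟨λ, λ ◁ x, (λ ◁ x) ◁ y⟩ \ ((λ ◁ x) ◁ y)) for all λ ∈ Λ and x, y ∈ X. -/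
/-- Every dynamical Yang–Baxter map on a dynamical set `(X, act)` of PH type
(with left division `dv`) arises from a unique ternary operation `T` on `Λ`
via the formulas defining `σ_T`. -/
theorem DYB_on_PH_unique_ternary {Λ X : Type*} [Nonempty Λ] (act : Λ → X → Λ)
    (hPH : Function.Bijective fun p : Λ × X => (p.1, act p.1 p.2))
    (dv : Λ → Λ → X)
    (hdv1 : ∀ l m, act l (dv l m) = m)
    (hdv2 : ∀ l x, dv l (act l x) = x)
    (l r : Λ → X → X → X) (h : IsDYBMap act l r) :
    ∃! T : Λ → Λ → Λ → Λ, ∀ lam x y,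
      l lam x y = sigmaTL act dv T lam x y ∧
      r lam x y = sigmaTR act dv T lam x y := by
  refine ⟨fun a b c => act a (l a (dv a b) (dv b c)), ?_, ?_⟩
  · intro lam x y
    simp only [sigmaTL, sigmaTR, hdv2, true_and]
    rw [← h.1 lam x y, hdv2]
  · intro T hT
    funext a b c
    have := (hT a (dv a b) (dv b c)).1
    simp only [sigmaTL, hdv1] at this
    rw [this, hdv1]
end

section
/- For i = 1, 2, let X_i be a dynamical set over Λ of PH type and T_i a ternary operation on Λ satisfying (E1) and (E2), and let σ_i = σ_{T_i} be the associated dynamical Yang–Baxter map on X_i. Then (X_1, σ_1) and (X_2, σ_2) are equivalent — i.e. there exists an isomorphism f : X_1 → X_2 of dynamical sets with (f ⊗ f)(λ) ∘ σ_1(λ) = σ_2(λ) ∘ (f ⊗ f)(λ) for all λ ∈ Λ, where (f ⊗ f)(λ)(x, y) = (f(λ)(x), f(λ ◁ x)(y)) — if and only if T_1 = T_2. -/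
/-- The dynamical Yang–Baxter map `σ_T` as a family of maps on `X × X`. -/
def sigmaTMap {Λ X : Type*} (act : Λ → X → Λ) (dv : Λ → Λ → X)
    (T : Λ → Λ → Λ → Λ) : Λ → X × X → X × X :=
  fun lam p => (sigmaTL act dv T lam p.1 p.2, sigmaTR act dv T lam p.1 p.2)

/-- `(g ⊗ g)(λ)(x, y) = (g(λ)(x), g(λ ◁ x)(y))`, where `◁` is the structure map
of the domain. -/
def tensorSq {Λ X Y : Type*} (actX : Λ → X → Λ) (g : Λ → X → Y) :
    Λ → X × X → Y × Y :=
  fun lam p => (g lam p.1, g (actX lam p.1) p.2)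

/-- For `i = 1, 2`, let `X_i` be a dynamical set over `Λ` of PH type (with left
division `dv_i`) and `T_i` a ternary operation satisfying (E1) and (E2), with
associated dynamical Yang–Baxter map `σ_i = σ_{T_i}`. Then `(X_1, σ_1)` and
`(X_2, σ_2)` are equivalent if and only if `T_1 = T_2`. -/
theorem sigmaT_equivalent_iff_ternary_eq {Λ X1 X2 : Type*} [Nonempty Λ]
    (act1 : Λ → X1 → Λ) (act2 : Λ → X2 → Λ)
    (hPH1 : Function.Bijective fun p : Λ × X1 => (p.1, act1 p.1 p.2))
    (hPH2 : Function.Bijective fun p : Λ × X2 => (p.1, act2 p.1 p.2))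
    (dv1 : Λ → Λ → X1)
    (hdv11 : ∀ l m, act1 l (dv1 l m) = m)
    (hdv12 : ∀ l x, dv1 l (act1 l x) = x)
    (dv2 : Λ → Λ → X2)
    (hdv21 : ∀ l m, act2 l (dv2 l m) = m)
    (hdv22 : ∀ l x, dv2 l (act2 l x) = x)
    (T1 T2 : Λ → Λ → Λ → Λ)
    (hT1 : TernE1 T1 ∧ TernE2 T1) (hT2 : TernE1 T2 ∧ TernE2 T2) :
    (∃ f : Λ → X1 → X2,
        (∀ l x, act2 l (f l x) = act1 l x) ∧
        (∀ l, Function.Bijective (f l)) ∧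
        (∀ lam p, tensorSq act1 f lam (sigmaTMap act1 dv1 T1 lam p)
            = sigmaTMap act2 dv2 T2 lam (tensorSq act1 f lam p)))
      ↔ T1 = T2 := by
  constructor
  · rintro ⟨f, hf, -, h⟩
    funext a b c
    have h1 := congrArg (fun q => act2 a q.1) (h a (dv1 a b, dv1 b c))
    simpa [tensorSq, sigmaTMap, sigmaTL, sigmaTR, hf, hdv11, hdv21] using h1
  · rintro rfl
    refine ⟨fun l x => dv2 l (act1 l x), fun l x => hdv21 _ _, fun l => ?_, ?_⟩
    · refine Function.bijective_iff_has_inverse.2 ⟨fun y => dv1 l (act2 l y), ?_, ?_⟩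
      · intro x
        simp [hdv12, hdv21]
      · intro y
        simp [hdv11, hdv22]
    · rintro l ⟨x, y⟩
      simp [tensorSq, sigmaTMap, sigmaTL, sigmaTR, hdv11, hdv21]
end

section
/- Let X be a dynamical set over Λ of PH type, T = ⟨-,-,-⟩ a ternary operation on Λ satisfying (E1) and (E2), and σ_T the associated dynamical Yang–Baxter map on X. Then σ_T is unitary, i.e. σ_T(λ) ∘ σ_T(λ) is the identity of X × X for all λ ∈ Λ, if and only if ⟨a, ⟨a, b, c⟩, c⟩ = b for all a, b, c ∈ Λ. -/
/-- For a dynamical set `(X, act)` of PH type (with left division `dv`) and a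
ternary operation `T` satisfying (E1) and (E2), the dynamical Yang–Baxter map
`σ_T` is unitary if and only if `⟨a, ⟨a,b,c⟩, c⟩ = b` for all `a, b, c ∈ Λ`. -/
theorem sigmaT_unitary_iff {Λ X : Type*} [Nonempty Λ] (act : Λ → X → Λ)
    (hPH : Function.Bijective fun p : Λ × X => (p.1, act p.1 p.2))
    (dv : Λ → Λ → X)
    (hdv1 : ∀ l m, act l (dv l m) = m)
    (hdv2 : ∀ l x, dv l (act l x) = x)
    (T : Λ → Λ → Λ → Λ) (hE1 : TernE1 T) (hE2 : TernE2 T) :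
    (∀ lam (p : X × X),
        sigmaTMap act dv T lam (sigmaTMap act dv T lam p) = p)
      ↔ ∀ a b c : Λ, T a (T a b c) c = b := by
  constructor
  · intro h a b c
    have h1 := congrArg (fun q => act a q.1) (h a (dv a b, dv b c))
    simpa [sigmaTMap, sigmaTL, sigmaTR, hdv1] using h1
  · rintro h lam ⟨x, y⟩
    simp [sigmaTMap, sigmaTL, sigmaTR, hdv1, hdv2, h]
end

section
/- Let X be a dynamical set over Λ of PH type, T = ⟨-,-,-⟩ a ternary operation on Λ satisfying (E1) and (E2), and σ_T the associated dynamical Yang–Baxter map on X. Then σ_T is idempotent, i.e. σ_T(λ) ∘ σ_T(λ) = σ_T(λ) for all λ ∈ Λ, if and only if ⟨a, ⟨a, b, c⟩, c⟩ = ⟨a, b, c⟩ for all a, b, c ∈ Λ. -/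
/-- For a dynamical set `(X, act)` of PH type (with left division `dv`) and a
ternary operation `T` satisfying (E1) and (E2), the dynamical Yang–Baxter map
`σ_T` is idempotent if and only if `⟨a, ⟨a,b,c⟩, c⟩ = ⟨a,b,c⟩` for all
`a, b, c ∈ Λ`. -/
theorem sigmaT_idempotent_iff {Λ X : Type*} [Nonempty Λ] (act : Λ → X → Λ)
    (hPH : Function.Bijective fun p : Λ × X => (p.1, act p.1 p.2))
    (dv : Λ → Λ → X)
    (hdv1 : ∀ l m, act l (dv l m) = m)
    (hdv2 : ∀ l x, dv l (act l x) = x)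
    (T : Λ → Λ → Λ → Λ) (hE1 : TernE1 T) (hE2 : TernE2 T) :
    (∀ lam (p : X × X),
        sigmaTMap act dv T lam (sigmaTMap act dv T lam p)
          = sigmaTMap act dv T lam p)
      ↔ ∀ a b c : Λ, T a (T a b c) c = T a b c := by
  constructor
  · intro h a b c
    have h1 := congrArg (fun q => act a q.1) (h a (dv a b, dv b c))
    simpa [sigmaTMap, sigmaTL, sigmaTR, hdv1] using h1
  · intro h lam p
    simp [sigmaTMap, sigmaTL, sigmaTR, hdv1, h]
end

section
/- Let X be a dynamical set over Λ of PH type, T = ⟨-,-,-⟩ a ternary operation on Λ satisfying (E1) and (E2), and σ_T the associated dynamical Yang–Baxter map on X. Then σ_T is invertible, i.e. σ_T(λ) : X × X → X × X is bijective for every λ ∈ Λ, if and only if for all a, c ∈ Λ the map Λ → Λ, x ↦ ⟨a, x, c⟩, is bijective. -/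
/-- For a dynamical set `(X, act)` of PH type (with left division `dv`) and a
ternary operation `T` satisfying (E1) and (E2), the dynamical Yang–Baxter map
`σ_T` is invertible if and only if `x ↦ ⟨a, x, c⟩` is bijective for all
`a, c ∈ Λ`. -/
theorem sigmaT_invertible_iff {Λ X : Type*} [Nonempty Λ] (act : Λ → X → Λ)
    (hPH : Function.Bijective fun p : Λ × X => (p.1, act p.1 p.2))
    (dv : Λ → Λ → X)
    (hdv1 : ∀ l m, act l (dv l m) = m)
    (hdv2 : ∀ l x, dv l (act l x) = x)
    (T : Λ → Λ → Λ → Λ) (hE1 : TernE1 T) (hE2 : TernE2 T) :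
    (∀ lam, Function.Bijective (sigmaTMap act dv T lam))
      ↔ ∀ a c : Λ, Function.Bijective fun x => T a x c := by
  have key : ∀ a x c, sigmaTMap act dv T a (dv a x, dv x c)
      = (dv a (T a x c), dv (T a x c) c) := by
    intro a x c
    simp only [sigmaTMap, sigmaTL, sigmaTR, hdv1]
  have hinj : ∀ a x c x' c', (dv a x, dv x c) = (dv a x', dv x' c') → x = x' ∧ c = c' := by
    intro a x c x' c' h
    obtain ⟨h1, h2⟩ := Prod.mk.inj h
    have hx : x = x' := by rw [← hdv1 a x, h1, hdv1]
    subst hx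
    exact ⟨rfl, by rw [← hdv1 x c, h2, hdv1]⟩
  have hsurj : ∀ a (p : X × X), ∃ x c, p = (dv a x, dv x c) := by
    rintro a ⟨u, v⟩
    exact ⟨act a u, act (act a u) v, by rw [hdv2, hdv2]⟩
  constructor
  · intro h a c
    constructor
    · intro x y hxy
      have hxy' : T a x c = T a y c := hxy
      have := (h a).1 (a₁ := (dv a x, dv x c)) (a₂ := (dv a y, dv y c))
        (by rw [key, key, hxy'])
      exact (hinj _ _ _ _ _ this).1
    · intro z
      obtain ⟨p, hp⟩ := (h a).2 (dv a z, dv z c)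
      obtain ⟨x, c', rfl⟩ := hsurj a p
      rw [key] at hp
      obtain ⟨h1, h2⟩ := hinj _ _ _ _ _ hp
      subst h2
      exact ⟨x, h1⟩
  · intro h a
    constructor
    · intro p q hpq
      obtain ⟨x, c, rfl⟩ := hsurj a p
      obtain ⟨y, d, rfl⟩ := hsurj a q
      rw [key, key] at hpq
      obtain ⟨h1, h2⟩ := hinj _ _ _ _ _ hpq
      subst h2
      have hxy : x = y := (h a c).1 h1
      rw [hxy]
    · intro p
      obtain ⟨z, c, rfl⟩ := hsurj a p
      obtain ⟨x, hx⟩ := (h a c).2 z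
      have hx' : T a x c = z := hx
      exact ⟨(dv a x, dv x c), by rw [key, hx']⟩
end

section
/- Let * be a binary operation on Λ such that (Λ, *) is a left quasigroup with left division \, and suppose that (a * c) \ ((a * b) * c) = (a' * c) \ ((a' * b) * c) for all a, a', b, c ∈ Λ. Then the ternary operation ⟨a, b, c⟩ := a * (b \ c) on Λ satisfies, for all a, b, c, d ∈ Λ, the equations (E1): ⟨a, ⟨a, b, c⟩, ⟨⟨a, b, c⟩, c, d⟩⟩ = ⟨a, b, ⟨b, c, d⟩⟩ and (E2): ⟨⟨a, b, c⟩, c, d⟩ = ⟨⟨a, b, ⟨b, c, d⟩⟩, ⟨b, c, d⟩, d⟩. -/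
/-- Let `(Λ, *)` be a left quasigroup with left division `\`, satisfying
`(a * c) \ ((a * b) * c) = (a' * c) \ ((a' * b) * c)` for all `a, a', b, c`.
Then the ternary operation `⟨a, b, c⟩ = a * (b \ c)` satisfies (E1) and (E2). -/
theorem quasigroup_ternary_satisfies_E1_E2 {Λ : Type*} [Nonempty Λ]
    (star ldiv : Λ → Λ → Λ)
    (hbij : ∀ a, Function.Bijective (star a))
    (hd1 : ∀ a x, ldiv a (star a x) = x)
    (hd2 : ∀ a b, star a (ldiv a b) = b)
    (hcond : ∀ a a' b c,
      ldiv (star a c) (star (star a b) c)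
        = ldiv (star a' c) (star (star a' b) c)) :
    TernE1 (fun a b c => star a (ldiv b c)) ∧
    TernE2 (fun a b c => star a (ldiv b c)) := by
  refine ⟨fun a b c d => ?_, fun a b c d => ?_⟩
  · simp only [hd1]
  · obtain ⟨x, rfl⟩ := (hbij b).2 c
    obtain ⟨y, rfl⟩ := (hbij (star b x)).2 d
    simp only [hd1]
    rw [hcond b a x y, hd2]
end

section
/- Let X₀ be a non-empty set, {*_i}_{i∈X₀} a family of binary operations on Λ each making (Λ, *_i) a left quasigroup with left division \_i, and let X = X₀ × Λ be the dynamical set over Λ with λ ◁ (i, μ) = λ *_i μ. Let σ₀ : X₀ × X₀ → X₀ × X₀ be a map, written σ₀(i, j) = (i ▷ j, i ◁ j), and let T = ⟨-,-,-⟩ be a ternary operation on Λ. Define σ(λ)((i, x), (j, y)) = ((i ▷ j, λ \_{i ▷ j} m), (i ◁ j, m \_{i ◁ j} ((λ *_i x) *_j y))), where m = ⟨λ, λ *_i x, (λ *_i x) *_j y⟩. Then σ is a dynamical Yang–Baxter map on X if and only if σ₀ is a Yang–Baxter map on X₀ and T satisfies (E1) and (E2). -/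
/-- `(σ₀ × id)` on `X₀ × X₀ × X₀`, where `σ₀(i,j) = (tL i j, tR i j)`. -/
def ybS12 {X0 : Type*} (tL tR : X0 → X0 → X0) :
    X0 × X0 × X0 → X0 × X0 × X0 :=
  fun t => (tL t.1 t.2.1, tR t.1 t.2.1, t.2.2)

/-- `(id × σ₀)` on `X₀ × X₀ × X₀`. -/
def ybS23 {X0 : Type*} (tL tR : X0 → X0 → X0) :
    X0 × X0 × X0 → X0 × X0 × X0 :=
  fun t => (t.1, tL t.2.1 t.2.2, tR t.2.1 t.2.2)

/-- The structure map of the dynamical set `X = X₀ × Λ`: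
`λ ◁ (i, μ) = λ *_i μ`. -/
def actXfam {Λ X0 : Type*} (star : X0 → Λ → Λ → Λ) : Λ → X0 × Λ → Λ :=
  fun lam p => star p.1 lam p.2

/-- The left component of `σ`:
`(i, x) ⇀_λ (j, y) = (i ▷ j, λ \_{i ▷ j} ⟨λ, λ *_i x, (λ *_i x) *_j y⟩)`. -/
def newSigmaL {Λ X0 : Type*} (star ldiv : X0 → Λ → Λ → Λ)
    (tL : X0 → X0 → X0) (T : Λ → Λ → Λ → Λ) :
    Λ → X0 × Λ → X0 × Λ → X0 × Λ :=
  fun lam p q =>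
    (tL p.1 q.1,
      ldiv (tL p.1 q.1) lam
        (T lam (star p.1 lam p.2) (star q.1 (star p.1 lam p.2) q.2)))

/-- The right component of `σ`:
`(i, x) ↼_λ (j, y) = (i ◁ j, ⟨λ, λ *_i x, (λ *_i x) *_j y⟩ \_{i ◁ j} ((λ *_i x) *_j y))`. -/
def newSigmaR {Λ X0 : Type*} (star ldiv : X0 → Λ → Λ → Λ)
    (tR : X0 → X0 → X0) (T : Λ → Λ → Λ → Λ) :
    Λ → X0 × Λ → X0 × Λ → X0 × Λ :=
  fun lam p q =>
    (tR p.1 q.1,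
      ldiv (tR p.1 q.1)
        (T lam (star p.1 lam p.2) (star q.1 (star p.1 lam p.2) q.2))
        (star q.1 (star p.1 lam p.2) q.2))

/-- The map `σ` on the dynamical set `X = X₀ × Λ` built from `σ₀` and a ternary
operation `T` is a dynamical Yang–Baxter map if and only if `σ₀` is a
Yang–Baxter map on `X₀` and `T` satisfies (E1) and (E2). -/
theorem newSigma_DYB_iff {Λ X0 : Type*} [Nonempty Λ] [Nonempty X0]
    (star ldiv : X0 → Λ → Λ → Λ)
    (hbij : ∀ i a, Function.Bijective (star i a))
    (hd1 : ∀ i a x, ldiv i a (star i a x) = x)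
    (hd2 : ∀ i a b, star i a (ldiv i a b) = b)
    (tL tR : X0 → X0 → X0) (T : Λ → Λ → Λ → Λ) :
    IsDYBMap (actXfam star) (newSigmaL star ldiv tL T) (newSigmaR star ldiv tR T)
      ↔ ((ybS12 tL tR ∘ ybS23 tL tR ∘ ybS12 tL tR
            = ybS23 tL tR ∘ ybS12 tL tR ∘ ybS23 tL tR) ∧
          TernE1 T ∧ TernE2 T) := by
  constructor
  · rintro ⟨-, h⟩
    have key : ∀ a b c d i j k, _ := fun a b c d i j k =>
      congrFun (h a) ((i, ldiv i a b), (j, ldiv j b c), (k, ldiv k c d))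
    simp only [Function.comp, dybS12, dybS23, actXfam, newSigmaL, newSigmaR, hd2,
      Prod.mk.injEq] at key
    obtain ⟨a0⟩ := ‹Nonempty Λ›
    obtain ⟨i0⟩ := ‹Nonempty X0›
    have e1 : TernE1 T := by
      intro a b c d
      obtain ⟨⟨p, q⟩, -⟩ := key a b c d i0 i0 i0
      rw [← p] at q
      have := congrArg (star (tL (tL i0 i0) (tL (tR i0 i0) i0)) a) q
      simpa only [hd2] using this
    refine ⟨?_, e1, ?_⟩
    · funext ⟨i, j, k⟩
      obtain ⟨⟨p, -⟩, ⟨q, -⟩, ⟨r, -⟩⟩ := key a0 a0 a0 a0 i j k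
      simp only [Function.comp, ybS12, ybS23, Prod.mk.injEq]
      exact ⟨p, q, r⟩
    · intro a b c d
      obtain ⟨-, ⟨p, q⟩, -⟩ := key a b c d i0 i0 i0
      rw [← p, e1 a b c d] at q
      have := congrArg
        (star (tR (tL i0 i0) (tL (tR i0 i0) i0)) (T a b (T b c d))) q
      simpa only [hd2] using this
  · rintro ⟨h0, e1, e2⟩
    refine ⟨?_, ?_⟩
    · intro lam x y
      simp only [actXfam, newSigmaL, newSigmaR, hd2]
    · intro lam
      funext ⟨⟨i, x⟩, ⟨j, y⟩, ⟨k, z⟩⟩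
      have h := congrFun h0 (i, j, k)
      simp only [Function.comp, ybS12, ybS23, Prod.mk.injEq] at h
      obtain ⟨p, q, r⟩ := h
      simp only [Function.comp, dybS12, dybS23, actXfam, newSigmaL, newSigmaR, hd2,
        Prod.mk.injEq]
      rw [e1, ← e2, p, q, r]
      simp
end

section
/- Let X₀ be a non-empty set, {*_i}_{i∈X₀} a family of left-quasigroup operations on Λ with left divisions \_i, and X = X₀ × Λ the dynamical set over Λ with λ ◁ (i, μ) = λ *_i μ. Let σ₀ be a Yang–Baxter map on X₀, written σ₀(i, j) = (i ▷ j, i ◁ j), let T = ⟨-,-,-⟩ be a ternary operation on Λ satisfying (E1) and (E2), and let σ be the resulting dynamical Yang–Baxter map σ(λ)((i, x), (j, y)) = ((i ▷ j, λ \_{i ▷ j} m), (i ◁ j, m \_{i ◁ j} ((λ *_i x) *_j y))) with m = ⟨λ, λ *_i x, (λ *_i x) *_j y⟩. Then: (a) σ(λ) ∘ σ(λ) = id for all λ if and only if σ₀ ∘ σ₀ = id and ⟨a, ⟨a, b, c⟩, c⟩ = b for all a, b, c ∈ Λ; (b) σ(λ) ∘ σ(λ) = σ(λ) for all λ if and only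 if σ₀ ∘ σ₀ = σ₀ and ⟨a, ⟨a, b, c⟩, c⟩ = ⟨a, b, c⟩ for all a, b, c ∈ Λ; (c) σ(λ) is bijective for all λ if and only if σ₀ is bijective and the map x ↦ ⟨a, x, c⟩ is bijective on Λ for all a, c ∈ Λ. -/
/-- The Yang–Baxter map `σ₀` as a map on `X₀ × X₀`. -/
def yb0 {X0 : Type*} (tL tR : X0 → X0 → X0) : X0 × X0 → X0 × X0 :=
  fun p => (tL p.1 p.2, tR p.1 p.2)

/-- The dynamical Yang–Baxter map `σ` as a family of maps on `X × X`,
`X = X₀ × Λ`. -/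
def newSigmaMap {Λ X0 : Type*} (star ldiv : X0 → Λ → Λ → Λ)
    (tL tR : X0 → X0 → X0) (T : Λ → Λ → Λ → Λ) :
    Λ → (X0 × Λ) × (X0 × Λ) → (X0 × Λ) × (X0 × Λ) :=
  fun lam p =>
    (newSigmaL star ldiv tL T lam p.1 p.2, newSigmaR star ldiv tR T lam p.1 p.2)

/-- Change of coordinates. -/
def phiEquiv {Λ X0 : Type*} (star ldiv : X0 → Λ → Λ → Λ)
    (hd1 : ∀ i a x, ldiv i a (star i a x) = x)
    (hd2 : ∀ i a b, star i a (ldiv i a b) = b) (lam : Λ) :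
    (X0 × Λ) × (X0 × Λ) ≃ (X0 × X0) × (Λ × Λ) where
  toFun p := ((p.1.1, p.2.1), (star p.1.1 lam p.1.2, star p.2.1 (star p.1.1 lam p.1.2) p.2.2))
  invFun q := ((q.1.1, ldiv q.1.1 lam q.2.1), (q.1.2, ldiv q.1.2 q.2.1 q.2.2))
  left_inv p := by simp [hd1]
  right_inv q := by simp [hd2]

/-- The conjugated map. -/
def gMap {Λ X0 : Type*} (tL tR : X0 → X0 → X0) (T : Λ → Λ → Λ → Λ) (lam : Λ) :
    (X0 × X0) × (Λ × Λ) → (X0 × X0) × (Λ × Λ) :=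
  Prod.map (yb0 tL tR) (fun q => (T lam q.1 q.2, q.2))

/-- For the dynamical Yang–Baxter map `σ` on `X = X₀ × Λ` built from a
Yang–Baxter map `σ₀` on `X₀` and a ternary operation `T` satisfying (E1) and
(E2): (a) `σ` is unitary iff `σ₀` is unitary and `⟨a,⟨a,b,c⟩,c⟩ = b`;
(b) `σ` is idempotent iff `σ₀` is idempotent and `⟨a,⟨a,b,c⟩,c⟩ = ⟨a,b,c⟩`;
(c) `σ` is invertible iff `σ₀` is invertible and `x ↦ ⟨a,x,c⟩` is bijective. -/
theorem newSigma_unitary_idempotent_invertible {Λ X0 : Type*}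
    [Nonempty Λ] [Nonempty X0]
    (star ldiv : X0 → Λ → Λ → Λ)
    (hbij : ∀ i a, Function.Bijective (star i a))
    (hd1 : ∀ i a x, ldiv i a (star i a x) = x)
    (hd2 : ∀ i a b, star i a (ldiv i a b) = b)
    (tL tR : X0 → X0 → X0)
    (hYB : ybS12 tL tR ∘ ybS23 tL tR ∘ ybS12 tL tR
            = ybS23 tL tR ∘ ybS12 tL tR ∘ ybS23 tL tR)
    (T : Λ → Λ → Λ → Λ) (hE1 : TernE1 T) (hE2 : TernE2 T) :
    -- (a) unitary
    ((∀ lam p, newSigmaMap star ldiv tL tR T lam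
          (newSigmaMap star ldiv tL tR T lam p) = p)
        ↔ ((∀ p, yb0 tL tR (yb0 tL tR p) = p) ∧
            ∀ a b c : Λ, T a (T a b c) c = b)) ∧
    -- (b) idempotent
    ((∀ lam p, newSigmaMap star ldiv tL tR T lam
          (newSigmaMap star ldiv tL tR T lam p)
            = newSigmaMap star ldiv tL tR T lam p)
        ↔ ((∀ p, yb0 tL tR (yb0 tL tR p) = yb0 tL tR p) ∧
            ∀ a b c : Λ, T a (T a b c) c = T a b c)) ∧
    -- (c) invertible
    ((∀ lam, Function.Bijective (newSigmaMap star ldiv tL tR T lam))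
        ↔ (Function.Bijective (yb0 tL tR) ∧
            ∀ a c : Λ, Function.Bijective fun x => T a x c)) := by
  obtain ⟨l0⟩ := ‹Nonempty Λ›
  obtain ⟨i0⟩ := ‹Nonempty X0›
  have key : ∀ lam p, newSigmaMap star ldiv tL tR T lam p
      = (phiEquiv star ldiv hd1 hd2 lam).symm
          (gMap tL tR T lam (phiEquiv star ldiv hd1 hd2 lam p)) := fun lam p => rfl
  refine ⟨?_, ?_, ?_⟩
  · have h : (∀ lam p, newSigmaMap star ldiv tL tR T lam
          (newSigmaMap star ldiv tL tR T lam p) = p) ↔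
        ∀ lam q, gMap tL tR T lam (gMap tL tR T lam q) = q := by
      refine forall_congr' fun lam => ?_
      rw [← (phiEquiv star ldiv hd1 hd2 lam).forall_congr_right]
      refine forall_congr' fun p => ?_
      simp only [key, Equiv.apply_symm_apply, Equiv.symm_apply_eq]
    rw [h]
    constructor
    · intro H
      exact ⟨fun p => congrArg Prod.fst (H l0 (p, (l0, l0))),
        fun a b c => congrArg (fun t => t.2.1) (H a ((i0, i0), (b, c)))⟩
    · rintro ⟨h1, h2⟩ lam ⟨p, b, c⟩
      simp [gMap, h1, h2]
  · have h : (∀ lam p, newSigmaMap star ldiv tL tR T lam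
          (newSigmaMap star ldiv tL tR T lam p) = newSigmaMap star ldiv tL tR T lam p) ↔
        ∀ lam q, gMap tL tR T lam (gMap tL tR T lam q) = gMap tL tR T lam q := by
      refine forall_congr' fun lam => ?_
      rw [← (phiEquiv star ldiv hd1 hd2 lam).forall_congr_right]
      refine forall_congr' fun p => ?_
      simp only [key, Equiv.apply_symm_apply, EmbeddingLike.apply_eq_iff_eq]
    rw [h]
    constructor
    · intro H
      exact ⟨fun p => congrArg Prod.fst (H l0 (p, (l0, l0))),
        fun a b c => congrArg (fun t => t.2.1) (H a ((i0, i0), (b, c)))⟩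
    · rintro ⟨h1, h2⟩ lam ⟨p, b, c⟩
      simp [gMap, h1, h2]
  · have h : ∀ lam, Function.Bijective (newSigmaMap star ldiv tL tR T lam) ↔
        Function.Bijective (yb0 tL tR) ∧ ∀ c, Function.Bijective fun x => T lam x c := by
      intro lam
      have e : newSigmaMap star ldiv tL tR T lam = (phiEquiv star ldiv hd1 hd2 lam).symm ∘
          (gMap tL tR T lam ∘ phiEquiv star ldiv hd1 hd2 lam) := rfl
      haveI : Nonempty Λ := ⟨l0⟩
      haveI : Nonempty X0 := ⟨i0⟩
      rw [e, Equiv.comp_bijective, Equiv.bijective_comp, gMap, Prod.map_bijective]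
      refine and_congr_right fun _ => ?_
      constructor
      · intro H c
        constructor
        · intro x y hxy
          have := @H.1 (x, c) (y, c) (Prod.ext hxy rfl)
          exact congrArg Prod.fst this
        · intro y
          obtain ⟨⟨x, c'⟩, hx⟩ := H.2 (y, c)
          simp only [Prod.mk.injEq] at hx
          obtain ⟨hx, rfl⟩ := hx
          exact ⟨x, hx⟩
      · intro H
        constructor
        · rintro ⟨x, c⟩ ⟨y, d⟩ hxy
          simp only [Prod.mk.injEq] at hxy
          obtain ⟨hx, rfl⟩ := hxy
          rw [(H c).1 hx]
        · rintro ⟨y, c⟩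
          obtain ⟨x, hx⟩ := (H c).2 y
          exact ⟨(x, c), Prod.ext hx rfl⟩
    simp only [h]
    exact ⟨fun H => ⟨(H l0).1, fun a => (H a).2⟩, fun H a => ⟨H.1, H.2 a⟩⟩
end
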